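/- Given 0 < δ ≤ ρ_i, \barρ_i ≤ M for all i and 0 < δ ≤ θ, \barθ ≤ M, there exist constants c₁, c₂ > 0 depending only on δ, M, n, and the constants R_i, c_i, such that for the multicomponent ideal gas: c₁|ω − \barω|² ≤ J(ω|\barω) and |p(ω|\barω)| + |(−ρη)(ω|\barω)| ≤ c₂ J(ω|\barω), where J, p(·|·), (−ρη)(·|·) are the relative quantities for the ideal-gas free energy ρψ = Σ_i R_i θ ρ_i log ρ_i − Σ_i c_i ρ_i θ log θ. -/

import Mathlib

/-!
The relative energy splits into Bregman divergences `D` of `x ↦ x log x`: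
`J(ω|ω̄) = θ̄ ∑ Rᵢ D(ρᵢ, ρ̄ᵢ) + (∑ cᵢ ρᵢ) D(θ̄, θ)`, with the temperatures
swapped. Since `(a - b)² ≤ 2 (a + b) D(a, b)`, the energy controls `|ω - ω̄|²` on the box.
The pressure is bilinear, so its remainder is `(∑ Rᵢ (ρᵢ - ρ̄ᵢ)) (θ - θ̄)`, and that of `-ρη` is
`(J - (∑ cᵢ (ρᵢ - ρ̄ᵢ)) (θ - θ̄)) / θ̄`; both are then bounded by `J` through Young's inequality.
-/

namespace IdealGas

/-- The Bregman divergence of `x ↦ x log x`, that is, its second-order Taylor remainder at `b`.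
It is meaningful for `0 ≤ a` and `0 < b`. -/
noncomputable def mulLogBregman (a b : ℝ) : ℝ :=
  a * (Real.log a - Real.log b) - (a - b)

theorem sq_sqrt_sub_sqrt_le_mulLogBregman {a b : ℝ} (ha : 0 ≤ a) (hb : 0 < b) :
    (√a - √b) ^ 2 ≤ mulLogBregman a b := by
  rcases ha.eq_or_lt with rfl | ha
  · simp [mulLogBregman, Real.sq_sqrt hb.le]
  have hsa : 0 < √a := Real.sqrt_pos.2 ha
  have hsb : 0 < √b := Real.sqrt_pos.2 hb
  have log_le : Real.log √b - Real.log √a ≤ √b / √a - 1 := by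
    rw [← Real.log_div hsb.ne' hsa.ne']
    exact Real.log_le_sub_one_of_pos (by positivity)
  have mul_log_le : a * (Real.log √b - Real.log √a) ≤ √a * √b - a :=
    calc a * (Real.log √b - Real.log √a) ≤ √a ^ 2 * (√b / √a - 1) := by
          rw [Real.sq_sqrt ha.le]; gcongr
      _ = √a * √b - √a ^ 2 := by field_simp
      _ = √a * √b - a := by rw [Real.sq_sqrt ha.le]
  rw [Real.log_sqrt ha.le, Real.log_sqrt hb.le] at mul_log_le
  rw [mulLogBregman, sub_sq, Real.sq_sqrt ha.le, Real.sq_sqrt hb.le]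
  linarith

theorem sq_sub_le_two_mul_add_mul_mulLogBregman {a b : ℝ} (ha : 0 ≤ a) (hb : 0 < b) :
    (a - b) ^ 2 ≤ 2 * (a + b) * mulLogBregman a b :=
  calc (a - b) ^ 2 = (√a + √b) ^ 2 * (√a - √b) ^ 2 := by
        rw [← mul_pow, ← sq_sub_sq, Real.sq_sqrt ha, Real.sq_sqrt hb.le]
    _ ≤ 2 * (√a ^ 2 + √b ^ 2) * (√a - √b) ^ 2 := by
        gcongr; exact add_sq_le
    _ ≤ 2 * (a + b) * mulLogBregman a b := by
        rw [Real.sq_sqrt ha, Real.sq_sqrt hb.le]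
        gcongr
        exact sq_sqrt_sub_sqrt_le_mulLogBregman ha hb

theorem mulLogBregman_nonneg {a b : ℝ} (ha : 0 ≤ a) (hb : 0 < b) : 0 ≤ mulLogBregman a b :=
  (sq_nonneg _).trans (sq_sqrt_sub_sqrt_le_mulLogBregman ha hb)

theorem sq_sub_le_four_mul_mulLogBregman {a b M : ℝ} (ha : 0 ≤ a) (hb : 0 < b)
    (haM : a ≤ M) (hbM : b ≤ M) : (a - b) ^ 2 ≤ 4 * M * mulLogBregman a b :=
  (sq_sub_le_two_mul_add_mul_mulLogBregman ha hb).trans <|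
    mul_le_mul_of_nonneg_right (by linarith) (mulLogBregman_nonneg ha hb)

variable {ι : Type*} [Fintype ι]

theorem abs_sum_mul_mul_le_half_sum_abs_mul (w x : ι → ℝ) (y : ℝ) :
    |(∑ i, w i * x i) * y| ≤ (∑ i, |w i|) / 2 * (∑ i, x i ^ 2 + y ^ 2) := by
  have young (i : ι) : |x i * y| ≤ (∑ j, x j ^ 2 + y ^ 2) / 2 := by
    have single_le : x i ^ 2 ≤ ∑ j, x j ^ 2 :=
      Finset.single_le_sum (fun j _ => sq_nonneg (x j)) (Finset.mem_univ i)
    have two_mul_le := two_mul_le_add_sq |x i| |y|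
    rw [sq_abs, sq_abs] at two_mul_le
    rw [abs_mul]
    linarith
  calc |(∑ i, w i * x i) * y| = |∑ i, w i * (x i * y)| := by
        simp only [Finset.sum_mul, mul_assoc]
    _ ≤ ∑ i, |w i| * |x i * y| := by
        simpa only [abs_mul] using Finset.abs_sum_le_sum_abs (fun i => w i * (x i * y)) _
    _ ≤ ∑ i, |w i| * ((∑ j, x j ^ 2 + y ^ 2) / 2) := by
        gcongr with i; exact young i
    _ = (∑ i, |w i|) / 2 * (∑ i, x i ^ 2 + y ^ 2) := by
        rw [← Finset.sum_mul]; ring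

/-- The internal energy `ρe` of the mixture. -/
def internalEnergy (c ρ : ι → ℝ) (θ : ℝ) : ℝ :=
  ∑ i, c i * ρ i * θ

/-- The entropy `ρη = -∂(ρψ)/∂θ` of the mixture. -/
noncomputable def entropy (R c ρ : ι → ℝ) (θ : ℝ) : ℝ :=
  (-∑ i, R i * ρ i * Real.log (ρ i)) + ∑ i, c i * ρ i * (1 + Real.log θ)

/-- The pressure `p` of the mixture. -/
def pressure (R ρ : ι → ℝ) (θ : ℝ) : ℝ :=
  ∑ i, R i * ρ i * θ

/-- The chemical potential `μᵢ = ∂(ρψ)/∂ρᵢ` of a single component, with its own constants `R`, `c`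
and density `ρ`. -/
noncomputable def chemicalPotential (R c ρ θ : ℝ) : ℝ :=
  R * (1 + Real.log ρ) * θ - c * θ * Real.log θ

/-- The relative energy `J(ω|ω̄)`; here and below primes mark the reference state `ω̄`. -/
noncomputable def relEnergy (R c ρ ρ' : ι → ℝ) (θ θ' : ℝ) : ℝ :=
  internalEnergy c ρ θ - internalEnergy c ρ' θ'
    - (∑ i, chemicalPotential (R i) (c i) (ρ' i) θ' * (ρ i - ρ' i))
    - θ' * (entropy R c ρ θ - entropy R c ρ' θ')

/-- The relative pressure `p(ω|ω̄)`, the second-order Taylor remainder of `pressure`. -/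
def relPressure (R ρ ρ' : ι → ℝ) (θ θ' : ℝ) : ℝ :=
  pressure R ρ θ - pressure R ρ' θ'
    - (∑ i, (R i * θ') * (ρ i - ρ' i)) - (∑ i, R i * ρ' i) * (θ - θ')

/-- The relative negative entropy `(-ρη)(ω|ω̄)`, the second-order Taylor remainder of `-entropy`. -/
noncomputable def relNegEntropy (R c ρ ρ' : ι → ℝ) (θ θ' : ℝ) : ℝ :=
  -entropy R c ρ θ + entropy R c ρ' θ'
    + (∑ i, (-(R i * (1 + Real.log (ρ' i))) + c i * (1 + Real.log θ')) * (ρ i - ρ' i))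
    + ((∑ i, c i * ρ' i) / θ') * (θ - θ')

/-- The squared Euclidean distance `|ω - ω̄|²` of two states. -/
def sqDist (ρ ρ' : ι → ℝ) (θ θ' : ℝ) : ℝ :=
  (∑ i, (ρ i - ρ' i) ^ 2) + (θ - θ') ^ 2

variable {R c ρ ρ' : ι → ℝ} {θ θ' : ℝ}

theorem sqDist_nonneg : 0 ≤ sqDist ρ ρ' θ θ' := by
  unfold sqDist; positivity

theorem relEnergy_eq_mulLogBregman :
    relEnergy R c ρ ρ' θ θ' =
      θ' * ∑ i, R i * mulLogBregman (ρ i) (ρ' i) + (∑ i, c i * ρ i) * mulLogBregman θ' θ := by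
  simp only [relEnergy, internalEnergy, entropy, chemicalPotential, mulLogBregman,
    ← Finset.sum_neg_distrib, ← Finset.sum_add_distrib, ← Finset.sum_sub_distrib,
    Finset.mul_sum, Finset.sum_mul]
  refine Finset.sum_congr rfl fun i _ => ?_
  ring

theorem relPressure_eq_sum_mul :
    relPressure R ρ ρ' θ θ' = (∑ i, R i * (ρ i - ρ' i)) * (θ - θ') := by
  simp only [relPressure, pressure, ← Finset.sum_sub_distrib, Finset.sum_mul]
  refine Finset.sum_congr rfl fun i _ => ?_
  ring

theorem relNegEntropy_eq_relEnergy_sub_div (hθ' : θ' ≠ 0) :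
    relNegEntropy R c ρ ρ' θ θ' =
      (relEnergy R c ρ ρ' θ θ' - (∑ i, c i * (ρ i - ρ' i)) * (θ - θ')) / θ' := by
  simp only [relNegEntropy, relEnergy, internalEnergy, entropy, chemicalPotential,
    ← Finset.sum_neg_distrib, ← Finset.sum_add_distrib, ← Finset.sum_sub_distrib,
    Finset.mul_sum, Finset.sum_mul, Finset.sum_div]
  refine Finset.sum_congr rfl fun i _ => ?_
  field_simp
  ring

theorem mul_sqDist_le_relEnergy [Nonempty ι] {m δ M : ℝ} (hm : 0 ≤ m) (hδ : 0 < δ)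
    (hR : ∀ i, m ≤ R i) (hc : ∀ i, m ≤ c i)
    (hρ : ∀ i, ρ i ∈ Set.Icc δ M) (hρ' : ∀ i, ρ' i ∈ Set.Icc δ M)
    (hθ : θ ∈ Set.Icc δ M) (hθ' : θ' ∈ Set.Icc δ M) :
    m * δ / (4 * M) * sqDist ρ ρ' θ θ' ≤ relEnergy R c ρ ρ' θ θ' := by
  have hM : 0 < M := hδ.trans_le (hθ.1.trans hθ.2)
  have bregman_ge {a b : ℝ} (ha : a ∈ Set.Icc δ M) (hb : b ∈ Set.Icc δ M) :
      (a - b) ^ 2 / (4 * M) ≤ mulLogBregman a b :=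
    (div_le_iff₀' (by positivity)).2 <| sq_sub_le_four_mul_mulLogBregman
      (hδ.le.trans ha.1) (hδ.trans_le hb.1) ha.2 hb.2
  have mass_ge : m * δ ≤ ∑ i, c i * ρ i := by
    have term_ge (i : ι) : m * δ ≤ c i * ρ i :=
      mul_le_mul (hc i) (hρ i).1 hδ.le (hm.trans (hc i))
    obtain ⟨i⟩ := ‹Nonempty ι›
    exact (term_ge i).trans <| Finset.single_le_sum
      (fun j _ => (mul_nonneg hm hδ.le).trans (term_ge j)) (Finset.mem_univ i)
  calc m * δ / (4 * M) * sqDist ρ ρ' θ θ'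
      = δ * ∑ i, m * ((ρ i - ρ' i) ^ 2 / (4 * M)) + m * δ * ((θ' - θ) ^ 2 / (4 * M)) := by
        rw [sqDist, ← Finset.mul_sum, ← Finset.sum_div]; ring
    _ ≤ θ' * ∑ i, R i * mulLogBregman (ρ i) (ρ' i)
          + (∑ i, c i * ρ i) * mulLogBregman θ' θ := by
        gcongr with i
        · exact hδ.le.trans hθ'.1
        · exact hθ'.1
        · exact hm.trans (hR i)
        · exact hR i
        · exact bregman_ge (hρ i) (hρ' i)
        · exact (mul_nonneg hm hδ.le).trans mass_ge
        · exact bregman_ge hθ' hθ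
    _ = relEnergy R c ρ ρ' θ θ' := relEnergy_eq_mulLogBregman.symm

theorem abs_relPressure_le :
    |relPressure R ρ ρ' θ θ'| ≤ (∑ i, |R i|) / 2 * sqDist ρ ρ' θ θ' := by
  rw [relPressure_eq_sum_mul]
  exact abs_sum_mul_mul_le_half_sum_abs_mul _ _ _

theorem abs_relNegEntropy_le (hθ' : 0 < θ') :
    |relNegEntropy R c ρ ρ' θ θ'| ≤
      (|relEnergy R c ρ ρ' θ θ'| + (∑ i, |c i|) / 2 * sqDist ρ ρ' θ θ') / θ' := by
  rw [relNegEntropy_eq_relEnergy_sub_div hθ'.ne', abs_div, abs_of_pos hθ']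
  gcongr
  exact (abs_sub _ _).trans <|
    add_le_add_right (abs_sum_mul_mul_le_half_sum_abs_mul _ _ _) _

theorem abs_relPressure_add_abs_relNegEntropy_le {κ δ : ℝ} (hκ : 0 < κ) (hδ : 0 < δ)
    (hθ' : δ ≤ θ') (coercive : κ * sqDist ρ ρ' θ θ' ≤ relEnergy R c ρ ρ' θ θ') :
    |relPressure R ρ ρ' θ θ'| + |relNegEntropy R c ρ ρ' θ θ'| ≤
      ((∑ i, |R i|) / 2 / κ + (1 + (∑ i, |c i|) / 2 / κ) / δ) * relEnergy R c ρ ρ' θ θ' := by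
  have hJ : 0 ≤ relEnergy R c ρ ρ' θ θ' := (mul_nonneg hκ.le sqDist_nonneg).trans coercive
  have sqDist_le : sqDist ρ ρ' θ θ' ≤ relEnergy R c ρ ρ' θ θ' / κ :=
    (le_div_iff₀' hκ).2 coercive
  have pressure_le := (abs_relPressure_le (R := R)).trans
    (mul_le_mul_of_nonneg_left sqDist_le (by positivity))
  have negEntropy_le :=
    calc |relNegEntropy R c ρ ρ' θ θ'|
        ≤ (|relEnergy R c ρ ρ' θ θ'| + (∑ i, |c i|) / 2 * sqDist ρ ρ' θ θ') / θ' :=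
          abs_relNegEntropy_le (hδ.trans_le hθ')
      _ ≤ (relEnergy R c ρ ρ' θ θ' + (∑ i, |c i|) / 2 * (relEnergy R c ρ ρ' θ θ' / κ)) / δ := by
          rw [abs_of_nonneg hJ]; gcongr
  refine (add_le_add pressure_le negEntropy_le).trans_eq ?_
  ring

end IdealGas

open IdealGas

/-- For states in the box `[δ, M]^{n+1}` with `0 < δ ≤ M`, there are constants
`c₁, c₂ > 0` (depending only on `δ, M, n, R_i, c_i`) such that for the multicomponent ideal gas,
`c₁|ω - ω̄|² ≤ J(ω|ω̄)` and `|p(ω|ω̄)| + |(-ρη)(ω|ω̄)| ≤ c₂ J(ω|ω̄)`, where `J`, `p(·|·)` and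
`(-ρη)(·|·)` are the relative quantities (second-order Taylor remainders) for the ideal-gas
free energy `ρψ = Σ R_i θ ρ_i log ρ_i - Σ c_i ρ_i θ log θ`. -/
theorem stmt17 (n : ℕ) (hn : 0 < n) (R cc : Fin n → ℝ)
    (hR : ∀ i, 0 < R i) (hcc : ∀ i, 0 < cc i)
    (δ M : ℝ) (hδ : 0 < δ) (hδM : δ ≤ M) :
    ∃ c₁ > (0 : ℝ), ∃ c₂ > (0 : ℝ),
      ∀ (ρ ρ' : Fin n → ℝ) (θ θ' : ℝ),
        (∀ i, ρ i ∈ Set.Icc δ M) → (∀ i, ρ' i ∈ Set.Icc δ M) →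
        θ ∈ Set.Icc δ M → θ' ∈ Set.Icc δ M →
        ∀ J P N : ℝ,
        J = (∑ i, cc i * ρ i * θ) - (∑ i, cc i * ρ' i * θ')
          - (∑ i, (R i * (1 + Real.log (ρ' i)) * θ' - cc i * θ' * Real.log θ') * (ρ i - ρ' i))
          - θ' * (((-∑ i, R i * ρ i * Real.log (ρ i)) + ∑ i, cc i * ρ i * (1 + Real.log θ))
              - ((-∑ i, R i * ρ' i * Real.log (ρ' i)) + ∑ i, cc i * ρ' i * (1 + Real.log θ'))) →
        P = (∑ j, R j * ρ j * θ) - (∑ j, R j * ρ' j * θ')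
          - (∑ j, (R j * θ') * (ρ j - ρ' j)) - (∑ j, R j * ρ' j) * (θ - θ') →
        N = (-((-∑ i, R i * ρ i * Real.log (ρ i)) + ∑ i, cc i * ρ i * (1 + Real.log θ)))
          + ((-∑ i, R i * ρ' i * Real.log (ρ' i)) + ∑ i, cc i * ρ' i * (1 + Real.log θ'))
          + (∑ j, (-(R j * (1 + Real.log (ρ' j))) + cc j * (1 + Real.log θ')) * (ρ j - ρ' j))
          + ((∑ i, cc i * ρ' i) / θ') * (θ - θ') →
        c₁ * ((∑ i, (ρ i - ρ' i) ^ 2) + (θ - θ') ^ 2) ≤ J ∧ |P| + |N| ≤ c₂ * J := by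
  have : Nonempty (Fin n) := ⟨⟨0, hn⟩⟩
  obtain ⟨i₀, hi₀⟩ := Finite.exists_min fun i => min (R i) (cc i)
  set m := min (R i₀) (cc i₀)
  have hm : 0 < m := lt_min (hR i₀) (hcc i₀)
  have hM : 0 < M := hδ.trans_le hδM
  have hκ : 0 < m * δ / (4 * M) := by positivity
  refine ⟨m * δ / (4 * M), hκ,
    (∑ i, |R i|) / 2 / (m * δ / (4 * M)) + (1 + (∑ i, |cc i|) / 2 / (m * δ / (4 * M))) / δ,
    by positivity, ?_⟩
  rintro ρ ρ' θ θ' hρ hρ' hθ hθ' _ _ _ rfl rfl rfl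
  have coercive : m * δ / (4 * M) * sqDist ρ ρ' θ θ' ≤ relEnergy R cc ρ ρ' θ θ' :=
    mul_sqDist_le_relEnergy hm.le hδ (fun i => (hi₀ i).trans (min_le_left _ _))
      (fun i => (hi₀ i).trans (min_le_right _ _)) hρ hρ' hθ hθ'
  exact ⟨coercive, abs_relPressure_add_abs_relNegEntropy_le hκ hδ hθ'.1 coercive⟩
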